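/- Seventh Block (macroscopic / homogenized problem): let f⁰ ∈ L²((0,1) × (−1/2,1/2)), let ū : [0,1] → ℝ be continuously differentiable, and let ũ¹ : [0,1] × ℝ → ℝ be continuous, 1-periodic in its second argument, with continuous partial derivative satisfying (∂ũ¹/∂y)(x,y) = ū'(x) (θ¹)'(y) for all x, y. Suppose the two-scale weak formulation holds: for every continuously differentiable v⁰ : ℝ → ℝ with compact support in (0,1) and every continuously differentiable v¹ : ℝ × ℝ → ℝ that is 1-periodic in its second argument and vanishes whenever its first argument lies outside a compact subset of (0,1), ∫∫_{(0,1)×(−1/2,1/2)} a⁰(y) (ū'(x) + (∂ũ¹/∂y)(x,y)) ((v⁰)'(x) + (∂v¹/∂y)(x,y)) dx dy = ∫∫ f⁰(x,y) v⁰(x) dx dy. Then ū solves the homogenized weak formulation: for every continuously differentiable v⁰ : ℝ → ℝ with compact support in (0,1), ∫₀¹ a^H ū'(x) (v⁰)'(x) dx = ∫₀¹ f^H(x) v⁰(x) dx, where a^H = ∫_{−1/2}^{1/2} a⁰(y) (1 + (θ¹)'(y))² dy and f^H(x) = ∫_{−1/2}^{1/2} f⁰(x,y) dy. -/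

import Mathlib

open Set MeasureTheory Filter

/-- The two-scale domain `(0,1) × (-1/2, 1/2)`. -/
noncomputable def twoScaleDom : Set (ℝ × ℝ) :=
  Ioo (0 : ℝ) 1 ×ˢ Ioo (-(1 / 2) : ℝ) (1 / 2)

/-- The harmonic mean `h = (∫_{-1/2}^{1/2} 1/a⁰)⁻¹` of `a⁰` over the unit cell. -/
noncomputable def harmMean (a : ℝ → ℝ) : ℝ :=
  (∫ y in (-(1 / 2) : ℝ)..(1 / 2), 1 / a y)⁻¹

/-- The cell corrector `θ¹(y) = ∫₀^y (h/a⁰(s) − 1) ds`. -/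
noncomputable def theta1 (a : ℝ → ℝ) (y : ℝ) : ℝ :=
  ∫ s in (0 : ℝ)..y, (harmMean a / a s - 1)

/-- The homogenized coefficient `a^H = ∫_{-1/2}^{1/2} a⁰ (1 + (θ¹)')²`. -/
noncomputable def aH (a : ℝ → ℝ) : ℝ :=
  ∫ y in (-(1 / 2) : ℝ)..(1 / 2), a y * (1 + deriv (theta1 a) y) ^ 2

/-- The homogenized right-hand side `f^H(x) = ∫_{-1/2}^{1/2} f⁰(x,y) dy`. -/
noncomputable def fH (f0 : ℝ × ℝ → ℝ) (x : ℝ) : ℝ :=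
  ∫ y in (-(1 / 2) : ℝ)..(1 / 2), f0 (x, y)

/-- **Seventh Block: macroscopic (homogenized) problem.** If `(ū, ũ¹)` solves
the two-scale weak formulation and `∂ũ¹/∂y(x,y) = ū'(x)(θ¹)'(y)`, then `ū`
solves the homogenized weak formulation `∫ a^H ū' (v⁰)' = ∫ f^H v⁰` for every
`C¹` test function `v⁰` compactly supported in `(0,1)`. -/
theorem seventh_block_macroscopic_problem (a : ℝ → ℝ) (α β : ℝ)
    (ha : Continuous a) (haper : ∀ y, a (y + 1) = a y)
    (hα : 0 < α) (hαβ : α ≤ β) (hbound : ∀ y, α ≤ a y ∧ a y ≤ β)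
    (f0 : ℝ × ℝ → ℝ) (hf0 : MemLp f0 2 (volume.restrict twoScaleDom))
    (ub : ℝ → ℝ) (hub : ContDiff ℝ 1 ub)
    (u1 : ℝ → ℝ → ℝ) (hu1c : Continuous (fun p : ℝ × ℝ => u1 p.1 p.2))
    (hu1per : ∀ x y : ℝ, u1 x (y + 1) = u1 x y)
    (u1y : ℝ → ℝ → ℝ)
    (hu1y : ∀ x y : ℝ, HasDerivAt (fun t => u1 x t) (u1y x y) y)
    (hu1yc : Continuous (fun p : ℝ × ℝ => u1y p.1 p.2))
    (hu1yeq : ∀ x y : ℝ, u1y x y = deriv ub x * deriv (theta1 a) y)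
    (hweak : ∀ v0 : ℝ → ℝ, ContDiff ℝ 1 v0 → HasCompactSupport v0 →
      tsupport v0 ⊆ Ioo (0 : ℝ) 1 →
      ∀ v1 : ℝ → ℝ → ℝ, ContDiff ℝ 1 (fun p : ℝ × ℝ => v1 p.1 p.2) →
        (∀ x y : ℝ, v1 x (y + 1) = v1 x y) →
        (∃ K : Set ℝ, IsCompact K ∧ K ⊆ Ioo (0 : ℝ) 1 ∧
          ∀ x ∉ K, ∀ y : ℝ, v1 x y = 0) →
        ∫ p in twoScaleDom,
            a p.2 * (deriv ub p.1 + u1y p.1 p.2)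
              * (deriv v0 p.1 + deriv (fun y => v1 p.1 y) p.2)
          = ∫ p in twoScaleDom, f0 p * v0 p.1) :
    ∀ v0 : ℝ → ℝ, ContDiff ℝ 1 v0 → HasCompactSupport v0 →
      tsupport v0 ⊆ Ioo (0 : ℝ) 1 →
      ∫ x in Ioo (0 : ℝ) 1, aH a * deriv ub x * deriv v0 x
        = ∫ x in Ioo (0 : ℝ) 1, fH f0 x * v0 x := by
  intro v0 hv hvc hvs
  have hpos : ∀ y, 0 < a y := fun y => lt_of_lt_of_le hα (hbound y).1
  have hcinv : Continuous (fun y => 1 / a y) :=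
    continuous_const.div ha (fun y => (hpos y).ne')
  have hder : ∀ y, deriv (theta1 a) y = harmMean a / a y - 1 := by
    intro y
    have hc : Continuous (fun s => harmMean a / a s - 1) :=
      (continuous_const.div ha (fun y => (hpos y).ne')).sub continuous_const
    exact hc.deriv_integral _ 0 y
  have hI : 0 < ∫ y in (-(1 / 2) : ℝ)..(1 / 2), 1 / a y :=
    intervalIntegral.intervalIntegral_pos_of_pos (hcinv.intervalIntegrable _ _)
      (fun y => one_div_pos.mpr (hpos y)) (by norm_num)
  have haH : aH a = harmMean a := by
    have h1 : aH a = ∫ y in (-(1 / 2) : ℝ)..(1 / 2), (harmMean a) ^ 2 * (1 / a y) := by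
      unfold aH
      congr 1
      funext y
      rw [hder]
      have := (hpos y).ne'
      field_simp
      ring
    rw [h1, intervalIntegral.integral_const_mul]
    unfold harmMean
    have := hI.ne'
    field_simp
  have key := hweak v0 hv hvc hvs (fun _ _ => 0) contDiff_const (fun _ _ => rfl)
    ⟨∅, isCompact_empty, empty_subset _, fun _ _ _ => rfl⟩
  have hL : ∫ p in twoScaleDom,
            a p.2 * (deriv ub p.1 + u1y p.1 p.2)
              * (deriv v0 p.1 + deriv (fun _ : ℝ => (0 : ℝ)) p.2)
      = ∫ x in Ioo (0 : ℝ) 1, aH a * deriv ub x * deriv v0 x := by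
    have h2 : ∀ p : ℝ × ℝ, a p.2 * (deriv ub p.1 + u1y p.1 p.2)
              * (deriv v0 p.1 + deriv (fun _ : ℝ => (0 : ℝ)) p.2)
        = (aH a * deriv ub p.1 * deriv v0 p.1) * (fun _ : ℝ => (1 : ℝ)) p.2 := by
      intro p
      rw [hu1yeq, hder, haH, deriv_const]
      have := (hpos p.2).ne'
      field_simp
      ring
    simp_rw [h2]
    unfold twoScaleDom
    rw [Measure.volume_eq_prod,
      setIntegral_prod_mul (fun x => aH a * deriv ub x * deriv v0 x) (fun _ : ℝ => (1 : ℝ))]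
    norm_num
  have hR : ∫ p in twoScaleDom, f0 p * v0 p.1
      = ∫ x in Ioo (0 : ℝ) 1, fH f0 x * v0 x := by
    have hfin : IsFiniteMeasure (volume.restrict twoScaleDom) := by
      refine ⟨?_⟩
      unfold twoScaleDom
      rw [Measure.restrict_apply_univ, Measure.volume_eq_prod, Measure.prod_prod]
      exact ENNReal.mul_lt_top (by simp) (by simp)
    have hfi : Integrable f0 (volume.restrict twoScaleDom) := hf0.integrable (by norm_num)
    obtain ⟨C, hC⟩ := hvc.exists_bound_of_continuous hv.continuous
    have hint : Integrable (fun p : ℝ × ℝ => f0 p * v0 p.1) (volume.restrict twoScaleDom) :=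
      hfi.mul_bdd (c := C) (hv.continuous.comp continuous_fst).aestronglyMeasurable
        (Eventually.of_forall fun p => hC p.1)
    unfold twoScaleDom at hint ⊢
    rw [Measure.volume_eq_prod] at hint ⊢
    rw [setIntegral_prod _ hint]
    congr 1
    funext x
    simp only
    rw [integral_mul_const, fH, intervalIntegral.integral_of_le (by norm_num),
      integral_Ioc_eq_integral_Ioo]
  rw [← hL, ← hR]
  exact key
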